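/- Let q be an odd prime power and let C be a linear [q+1, 2, q]_q code. Then C is uniformly packed in the wide sense if and only if q = 3, and C is completely regular if and only if q = 3. -/

import Mathlib

/-!
Any two coordinates of a codeword determine it, so the codewords are the points of an affine plane
of order `q`, the conditions `c i = a` are its lines, and a word `v` selects one line from each of
the `q + 1` parallel classes. The distance from `v` to `c` is `q + 1` minus the number of selected
lines through `c`.

*Covering radius at most `q - 2`* (`exists_three_le_agree`). Counting incidences once and twice
gives `∑ ag² = 2 ∑ ag`, where `ag` is the number of selected lines through a point. If `ag ≤ 2`
everywhere, then `ag ∈ {0, 2}` everywhere; but the values of `ag` along a line which is not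
selected add up to `q`, which is odd.

*A code with `q ≠ 3` is not uniformly packed* (`exists_generic`, `third_difference`). Extend the
packing coefficients by zero to a function `h`, so that `∑_c h (d(v, c)) = 1` for all `v`, and `h`
vanishes at `q - 1, q, q + 1`. For `q ≥ 5` there are nonzero `w₀, w₁, w₂` such that no nonzero
codeword has all of its first three coordinates `c i` in `{0, w i}`. Take the alternating sum of
the packing identity over the eight words whose first three coordinates are `0` or `w i`, all
other coordinates being fixed: the contributions of nonzero codewords cancel, and that of the zero
codeword is a third difference of `h`. Hence all third differences of `h` vanish on `[0, q + 1]`,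
so `h = 0`, which is absurd.

*Complete regularity implies uniform packing* (`CompletelyRegular.upws`), because the system for
the packing coefficients is triangular with nonzero diagonal.

*The case `q = 3`.* The covering radius is at most `1` and the minimum distance is `3`, so
`B_{v,0}` and `B_{v,1}` are determined by `d(v, C)`; the three incidence counts determine the
remaining numbers `B_{v,t}`.
-/

open Finset

/-- The distance `d(v, C)` from a vector `v` to a code `C`. -/
noncomputable def distTo {n : ℕ} {F : Type*} [DecidableEq F] (C : Set (Fin n → F))
    (v : Fin n → F) : ℕ :=
  sInf (hammingDist v '' C)

/-- `numAt C v t` is the number `B_{v,t}` of codewords of `C` at Hamming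
distance `t` from `v`. -/
noncomputable def numAt {n : ℕ} {F : Type*} [DecidableEq F] (C : Set (Fin n → F))
    (v : Fin n → F) (t : ℕ) : ℕ :=
  Set.ncard {c ∈ C | hammingDist v c = t}

/-- A code is completely regular if `B_{v,t}` depends only on `t` and `d(v,C)`. -/
def CompletelyRegular {n : ℕ} {F : Type*} [DecidableEq F]
    (C : Set (Fin n → F)) : Prop :=
  ∀ u v : Fin n → F, distTo C u = distTo C v → ∀ t, numAt C u t = numAt C v t

/-- The covering radius `ρ` of a code. -/
noncomputable def coveringRadius {n : ℕ} {F : Type*} [DecidableEq F]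
    (C : Set (Fin n → F)) : ℕ :=
  sSup (Set.range (distTo C))

/-- `C` is uniformly packed in the wide sense: there are rational packing
coefficients `β_0, …, β_ρ` with `∑ i, β i * B_{x,i} = 1` for every `x`. -/
def UPWS {n : ℕ} {F : Type*} [DecidableEq F] (C : Set (Fin n → F)) : Prop :=
  ∃ β : ℕ → ℚ, ∀ x : Fin n → F,
    ∑ i ∈ Finset.range (coveringRadius C + 1), β i * (numAt C x i : ℚ) = 1

/-- `C` is a linear `[n, k, d]` code: a `k`-dimensional subspace of `F^n` such
that `d` is the least Hamming weight of a nonzero codeword. -/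
def IsLinearCode {n : ℕ} {F : Type*} [Field F] [DecidableEq F]
    (C : Submodule F (Fin n → F)) (k d : ℕ) : Prop :=
  Module.finrank F C = k ∧
  IsLeast {w : ℕ | ∃ c ∈ C, c ≠ 0 ∧ hammingNorm c = w} d

/-- `C` is self-dual: it coincides with its Euclidean dual code. -/
def SelfDual {n : ℕ} {F : Type*} [Field F]
    (C : Submodule F (Fin n → F)) : Prop :=
  (C : Set (Fin n → F)) = {x | ∀ v ∈ C, ∑ i, x i * v i = 0}

/-! ### Completely regular codes are uniformly packed -/

section General

variable {n : ℕ} {F : Type*} [Fintype F] [DecidableEq F]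

lemma distTo_le_coveringRadius (C : Set (Fin n → F)) (v : Fin n → F) :
    distTo C v ≤ coveringRadius C :=
  le_csSup (Set.finite_range _).bddAbove ⟨v, rfl⟩

lemma numAt_eq_zero_of_lt (C : Set (Fin n → F)) (v : Fin n → F) {t : ℕ} (ht : t < distTo C v) :
    numAt C v t = 0 := by
  unfold numAt
  rw [Set.ncard_eq_zero (Set.toFinite _), Set.eq_empty_iff_forall_notMem]
  rintro c ⟨hc, hd⟩
  have : distTo C v ≤ t := Nat.sInf_le ⟨c, hc, hd⟩
  omega

lemma numAt_distTo_ne_zero (C : Set (Fin n → F)) (hC : C.Nonempty) (v : Fin n → F) :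
    numAt C v (distTo C v) ≠ 0 := by
  obtain ⟨c, hc, hd⟩ : distTo C v ∈ hammingDist v '' C := Nat.sInf_mem (hC.image _)
  unfold numAt
  exact Set.ncard_ne_zero_of_mem (a := c) ⟨hc, hd⟩ (Set.toFinite _)

/-- Back substitution, starting from the largest distance `d(v, C) = ρ`: the packing equation at
distance `d` involves only `β_d, …, β_ρ`, and the coefficient of `β_d` is nonzero. -/
lemma CompletelyRegular.upws {C : Set (Fin n → F)} (hC : C.Nonempty)
    (h : CompletelyRegular C) : UPWS C := by
  set ρ := coveringRadius C with hρ
  have key : ∀ m : ℕ, ∃ β : ℕ → ℚ, ∀ x : Fin n → F, ρ + 1 ≤ distTo C x + m →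
      ∑ i ∈ Finset.range (ρ + 1), β i * (numAt C x i : ℚ) = 1 := by
    intro m
    induction m with
    | zero =>
      refine ⟨0, fun x hx => ?_⟩
      have := distTo_le_coveringRadius C x
      omega
    | succ m ih =>
      obtain ⟨β, hβ⟩ := ih
      by_cases hex : ∃ y, distTo C y + m = ρ
      · obtain ⟨y, hy⟩ := hex
        set d := distTo C y with hd
        have hdmem : d ∈ Finset.range (ρ + 1) := by rw [Finset.mem_range]; omega
        have hne : (numAt C y d : ℚ) ≠ 0 := by
          exact_mod_cast numAt_distTo_ne_zero C hC y
        refine ⟨Function.update β d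
          ((1 - ∑ i ∈ (Finset.range (ρ + 1)).erase d, β i * (numAt C y i : ℚ)) / numAt C y d),
          fun x hx => ?_⟩
        have hcong : ∀ z : Fin n → F, ∀ b : ℚ,
            ∑ i ∈ (Finset.range (ρ + 1)).erase d, Function.update β d b i * (numAt C z i : ℚ)
              = ∑ i ∈ (Finset.range (ρ + 1)).erase d, β i * (numAt C z i : ℚ) := by
          intro z b
          refine Finset.sum_congr rfl fun i hi => ?_
          rw [Function.update_of_ne (Finset.ne_of_mem_erase hi)]
        rw [← Finset.add_sum_erase _ _ hdmem, hcong, Function.update_self]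
        by_cases hxd : distTo C x = d
        · have hxy : ∀ t, numAt C x t = numAt C y t := h x y hxd
          simp only [hxy]
          field_simp
          ring
        · have hz : numAt C x d = 0 := numAt_eq_zero_of_lt C x (by omega)
          have := hβ x (by omega)
          rw [← Finset.add_sum_erase _ _ hdmem, hz] at this
          rw [hz]
          simpa using this
      · refine ⟨β, fun x hx => hβ x ?_⟩
        by_contra hcon
        exact hex ⟨x, by omega⟩
  obtain ⟨β, hβ⟩ := key (ρ + 1)
  exact ⟨β, fun x => hβ x (by omega)⟩

end General

/-! ### The affine plane of codewords -/

section Plane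

open scoped Classical in
/-- The codewords of `C` as a finset. -/
noncomputable def words {n : ℕ} {F : Type*} [Field F] [Fintype F]
    (C : Submodule F (Fin n → F)) : Finset (Fin n → F) :=
  Finset.univ.filter (· ∈ C)

/-- The number of coordinates in which two words agree. -/
def agree {n : ℕ} {F : Type*} [DecidableEq F] (v c : Fin n → F) : ℕ :=
  #{i | v i = c i}

lemma hammingDist_add_agree {n : ℕ} {F : Type*} [DecidableEq F] (v c : Fin n → F) :
    hammingDist v c + agree v c = n := by
  unfold hammingDist agree
  rw [add_comm]
  have := Finset.card_filter_add_card_filter_not (s := (Finset.univ : Finset (Fin n)))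
    (fun i => v i = c i)
  simpa using this

lemma hammingDist_eq_norm_sub {n : ℕ} {F : Type*} [Field F] [DecidableEq F] (v c : Fin n → F) :
    hammingDist v c = hammingNorm (v - c) := by
  simp [hammingDist, hammingNorm, sub_eq_zero]

variable {F : Type*} [Field F] [Fintype F] [DecidableEq F]

lemma mem_words {n : ℕ} {F : Type*} [Field F] [Fintype F]
    {C : Submodule F (Fin n → F)} {c : Fin n → F} :
    c ∈ words C ↔ c ∈ C := by
  simp [words]

lemma numAt_eq_card {n : ℕ} (C : Submodule F (Fin n → F)) (v : Fin n → F) (t : ℕ) :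
    numAt (C : Set (Fin n → F)) v t = #{c ∈ words C | hammingDist v c = t} := by
  unfold numAt
  rw [← Set.ncard_coe_finset]
  congr 1
  ext c
  simp [mem_words]

/-- Through any two values prescribed in two distinct coordinates passes exactly one codeword:
two nonparallel lines of the plane meet in exactly one point. -/
def Interp {n : ℕ} {F : Type*} [Field F] (C : Submodule F (Fin n → F)) : Prop :=
  ∀ i j, i ≠ j → ∀ a b, ∃! c, c ∈ C ∧ c i = a ∧ c j = b

variable {q : ℕ} {C : Submodule F (Fin (q + 1) → F)}

lemma card_words {F : Type*} [Field F] [Fintype F] {q : ℕ}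
    {C : Submodule F (Fin (q + 1) → F)} (hq : Fintype.card F = q) (hC : Module.finrank F C = 2) :
    #(words C) = q ^ 2 := by
  classical
  have h : Fintype.card C = q ^ 2 := by
    rw [Module.card_eq_pow_finrank (K := F), hC, hq]
  rw [← h, Fintype.card_subtype]
  simp [words]

lemma interp_of_isLinearCode (hC : IsLinearCode C 2 q) :
    Interp C := by
  classical
  intro i j hij
  have hcard : Fintype.card C = Fintype.card (F × F) := by
    rw [Module.card_eq_pow_finrank (K := F), hC.1, Fintype.card_prod, sq]
  have hinj : Function.Injective (fun c : C => (c.1 i, c.1 j)) := by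
    rintro ⟨c, hc⟩ ⟨c', hc'⟩ h
    simp only [Prod.mk.injEq] at h
    by_contra hne
    have hsub : c - c' ≠ 0 := fun h0 => hne (Subtype.ext (sub_eq_zero.mp h0))
    have hw : q ≤ hammingNorm (c - c') := hC.2.2 ⟨c - c', C.sub_mem hc hc', hsub, rfl⟩
    have h1 := hammingDist_add_agree c c'
    have hdn : hammingDist c c' = hammingNorm (c - c') := hammingDist_eq_norm_sub c c'
    have h2 : 2 ≤ agree c c' := by
      rw [← Finset.card_pair hij]
      refine Finset.card_le_card fun k hk => ?_
      simp only [Finset.mem_insert, Finset.mem_singleton] at hk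
      rcases hk with rfl | rfl <;> simp [h]
    omega
  have hbij := (Fintype.bijective_iff_injective_and_card _).2 ⟨hinj, hcard⟩
  intro a b
  obtain ⟨⟨c, hc⟩, h⟩ := hbij.2 (a, b)
  simp only [Prod.mk.injEq] at h
  refine ⟨c, ⟨hc, h⟩, fun c' hc' => ?_⟩
  have := @hinj ⟨c', hc'.1⟩ ⟨c, hc⟩ (by simp [h, hc'.2])
  exact congrArg Subtype.val this

lemma Interp.eq {n : ℕ} {F : Type*} [Field F] {C : Submodule F (Fin n → F)} (h : Interp C)
    {i j : Fin n} (hij : i ≠ j) {c c' : Fin n → F} (hc : c ∈ C) (hc' : c' ∈ C) (hi : c i = c' i) (hj : c j = c' j) :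
    c = c' :=
  (h i j hij (c' i) (c' j)).unique ⟨hc, hi, hj⟩ ⟨hc', rfl, rfl⟩

lemma card_pair_eq_one (h : Interp C) {i j : Fin (q + 1)} (hij : i ≠ j) (a b : F) :
    #{c ∈ words C | c i = a ∧ c j = b} = 1 := by
  obtain ⟨c, hc, huniq⟩ := h i j hij a b
  rw [Finset.card_eq_one]
  refine ⟨c, ?_⟩
  ext c'
  simp only [Finset.mem_filter, mem_words, Finset.mem_singleton]
  exact ⟨huniq c', fun e => e ▸ hc⟩

lemma card_line (hq : Fintype.card F = q) (h : Interp C) (i : Fin (q + 1)) (a : F) :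
    #{c ∈ words C | c i = a} = q := by
  have hq0 : 0 < q := hq ▸ Fintype.card_pos
  have : Nontrivial (Fin (q + 1)) := Fin.nontrivial_iff_two_le.2 (by omega)
  obtain ⟨j, hj⟩ := exists_ne i
  rw [Finset.card_eq_sum_card_fiberwise (f := fun c => c j) (t := Finset.univ) (by simp)]
  simp only [Finset.filter_filter, card_pair_eq_one h hj.symm]
  simpa using hq

lemma sum_agree (hq : Fintype.card F = q) (h : Interp C) (v : Fin (q + 1) → F) :
    ∑ c ∈ words C, agree v c = (q + 1) * q := by
  simp only [agree, Finset.card_filter]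
  rw [Finset.sum_comm]
  simp only [← Finset.card_filter, eq_comm (a := v _), card_line hq h]
  simp

lemma sum_agree_sq (hq : Fintype.card F = q) (h : Interp C) (v : Fin (q + 1) → F) :
    ∑ c ∈ words C, agree v c ^ 2 = 2 * ((q + 1) * q) := by
  have hsq : ∀ c : Fin (q + 1) → F, agree v c ^ 2
      = ∑ i, ∑ j, if c i = v i ∧ c j = v j then 1 else 0 := by
    intro c
    simp only [agree, Finset.card_filter, sq, Finset.sum_mul_sum]
    refine Finset.sum_congr rfl fun i _ => Finset.sum_congr rfl fun j _ => ?_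
    by_cases h1 : v i = c i <;> by_cases h2 : v j = c j <;>
      simp [h1, h2, eq_comm (b := v _)]
  have hrow : ∀ i, ∑ j, #{c ∈ words C | c i = v i ∧ c j = v j} = 2 * q := by
    intro i
    rw [← Finset.add_sum_erase _ _ (Finset.mem_univ i)]
    rw [Finset.sum_congr rfl fun j hj =>
      card_pair_eq_one h (Finset.ne_of_mem_erase hj).symm (v i) (v j)]
    simp [card_line hq h]
    ring
  simp only [hsq]
  rw [Finset.sum_comm]
  have : ∀ i, ∑ c ∈ words C, ∑ j, (if c i = v i ∧ c j = v j then 1 else 0) = 2 * q := by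
    intro i
    rw [Finset.sum_comm, ← hrow i]
    simp only [Finset.card_filter]
  simp only [this]
  simp
  ring

/-- A line `c i = a` which is not selected by `v` meets each of the `q` selected lines of the other
directions in one point. -/
lemma sum_agree_line (h : Interp C) (v : Fin (q + 1) → F)
    (i : Fin (q + 1)) {a : F} (ha : a ≠ v i) :
    ∑ c ∈ words C with c i = a, agree v c = q := by
  simp only [agree, Finset.card_filter]
  rw [Finset.sum_comm]
  simp only [← Finset.card_filter, Finset.filter_filter, eq_comm (a := v _)]
  rw [← Finset.add_sum_erase _ _ (Finset.mem_univ i)]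
  rw [Finset.sum_congr rfl fun j hj =>
    card_pair_eq_one h (Finset.ne_of_mem_erase hj).symm a (v j)]
  have : #{c ∈ words C | c i = a ∧ c i = v i} = 0 := by
    rw [Finset.card_eq_zero, Finset.filter_eq_empty_iff]
    rintro c - ⟨h1, h2⟩
    exact ha (h1 ▸ h2)
  simp [this]

/-- In odd order, a choice of one line from each parallel class always has three concurrent
lines (there is no dual hyperoval). -/
lemma exists_three_le_agree (hq : Fintype.card F = q) (hodd : Odd q) (h : Interp C)
    (v : Fin (q + 1) → F) : ∃ c ∈ C, 3 ≤ agree v c := by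
  by_contra! hcon
  have hle : ∀ c ∈ words C, agree v c ^ 2 ≤ 2 * agree v c := by
    intro c hc
    have := hcon c (mem_words.1 hc)
    nlinarith
  have heq : ∑ c ∈ words C, agree v c ^ 2 = ∑ c ∈ words C, 2 * agree v c := by
    rw [sum_agree_sq hq h, ← Finset.mul_sum, sum_agree hq h]
  rw [Finset.sum_eq_sum_iff_of_le hle] at heq
  have heven : ∀ c ∈ words C, Even (agree v c) := by
    intro c hc
    have h1 := hcon c (mem_words.1 hc)
    have h2 := heq c hc
    interval_cases agree v c <;> first | decide | omega
  obtain ⟨a, ha⟩ := exists_ne (v 0)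
  have hsum := sum_agree_line h v 0 ha
  have : Even q := by
    rw [← hsum]
    exact Finset.even_sum _ fun c hc => heven c (Finset.mem_filter.1 hc).1
  exact (Nat.not_even_iff_odd.2 hodd) this

lemma distTo_le (hq : Fintype.card F = q) (hodd : Odd q) (h : Interp C)
    (v : Fin (q + 1) → F) : distTo (C : Set (Fin (q + 1) → F)) v ≤ q - 2 := by
  obtain ⟨c, hc, h3⟩ := exists_three_le_agree hq hodd h v
  have h1 := hammingDist_add_agree v c
  have : distTo (C : Set (Fin (q + 1) → F)) v ≤ hammingDist v c := Nat.sInf_le ⟨c, hc, rfl⟩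
  omega

lemma coveringRadius_le (hq : Fintype.card F = q) (hodd : Odd q) (h : Interp C) :
    coveringRadius (C : Set (Fin (q + 1) → F)) ≤ q - 2 := by
  refine csSup_le (Set.range_nonempty _) ?_
  rintro _ ⟨v, rfl⟩
  exact distTo_le hq hodd h v

/-! ### No uniform packing for orders other than three -/

lemma two_ne_zero_of_odd_card {F : Type*} [Field F] [Fintype F] {q : ℕ}
    (hq : Fintype.card F = q) (hodd : Odd q) : (2 : F) ≠ 0 := by
  refine Ring.two_ne_zero fun h2 => ?_
  have := FiniteField.even_card_of_char_two h2
  rw [hq] at this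
  exact (Nat.not_odd_iff.2 this) hodd

/-- Three nonzero values `w₀, w₁, w₂` such that only the zero codeword has each of its three
coordinates `c i, c j, c k` equal to `0` or to the corresponding `w`. -/
lemma exists_generic (hq : Fintype.card F = q) (hodd : Odd q) (hq5 : 5 ≤ q) {n : ℕ}
    {C : Submodule F (Fin n → F)} (h : Interp C)
    {i j k : Fin n} (hij : i ≠ j) (hik : i ≠ k) (hjk : j ≠ k) :
    ∃ w₀ w₁ w₂ : F, w₀ ≠ 0 ∧ w₁ ≠ 0 ∧ w₂ ≠ 0 ∧ ∀ c ∈ C, (c i = 0 ∨ c i = w₀) →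
      (c j = 0 ∨ c j = w₁) → (c k = 0 ∨ c k = w₂) → c = 0 := by
  have h2 := two_ne_zero_of_odd_card hq hodd
  obtain ⟨A, ⟨hA, hAi, hAj⟩, -⟩ := h i j hij 1 0
  have hAk : A k ≠ 0 := fun h0 => by
    have := h.eq hjk hA C.zero_mem hAj h0
    simp [this] at hAi
  obtain ⟨B, ⟨hB, hBi, hBk⟩, -⟩ := h i k hik 0 (A k)
  have hBj : B j ≠ 0 := fun h0 => by
    have := h.eq hij hB C.zero_mem hBi h0
    exact hAk (by simpa [this] using hBk.symm)
  -- The normalisation `B k = A k` makes `(A + B) k = 2 * A k`, which is nonzero in odd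
  -- characteristic, so that only three values of `w₂` are forbidden.
  obtain ⟨w, hw⟩ : ∃ w, w ∉ ({0, A k, 2 * A k} : Finset F) := by
    by_contra! hall
    have : (Finset.univ : Finset F) ⊆ {0, A k, 2 * A k} := fun x _ => hall x
    have h3 := (Finset.card_le_card this).trans Finset.card_le_three
    rw [Finset.card_univ, hq] at h3
    omega
  simp only [Finset.mem_insert, Finset.mem_singleton, not_or] at hw
  obtain ⟨hw0, hwA, hw2⟩ := hw
  refine ⟨1, B j, w, one_ne_zero, hBj, hw0, fun c hc hi hj hk => ?_⟩
  rcases hi with hi | hi <;> rcases hj with hj | hj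
  · exact h.eq hij hc C.zero_mem hi hj
  · have e := h.eq hij hc hB (hi.trans hBi.symm) hj
    rw [e, hBk] at hk
    rcases hk with hk | hk
    · exact absurd hk hAk
    · exact absurd hk.symm hwA
  · have e := h.eq hij hc hA (hi.trans hAi.symm) (hj.trans hAj.symm)
    rw [e] at hk
    rcases hk with hk | hk
    · exact absurd hk hAk
    · exact absurd hk.symm hwA
  · have e := h.eq hij hc (C.add_mem hA hB) (by simp [hi, hAi, hBi]) (by simp [hj, hAj])
    have e2 : c k = 2 * A k := by rw [e, Pi.add_apply, hBk]; ring
    rw [e2] at hk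
    rcases hk with hk | hk
    · exact absurd hk (mul_ne_zero h2 hAk)
    · exact absurd hk.symm hw2

/-- The word with first coordinates `a, b, d`, followed by `y`. -/
def word3 {F : Type*} {m : ℕ} (a b d : F) (y : Fin m → F) : Fin (m + 3) → F :=
  Fin.cons a (Fin.cons b (Fin.cons d y))

lemma hammingDist_word3 {F : Type*} [DecidableEq F] {m : ℕ} (a b d : F) (y : Fin m → F)
    (c : Fin (m + 3) → F) :
    hammingDist (word3 a b d y) c = (if a = c 0 then 0 else 1) + (if b = c 1 then 0 else 1) +
      (if d = c 2 then 0 else 1) + #{i : Fin m | y i ≠ c i.succ.succ.succ} := by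
  unfold hammingDist word3
  simp only [Finset.card_filter, Fin.sum_univ_succ, Fin.cons_zero, Fin.cons_succ, ne_eq, ite_not]
  simp only [Fin.succ_zero_eq_one, Fin.succ_one_eq_two, add_assoc]
  rfl

/-- If `∑_c h (d(v, c)) = 1` for all `v`, then the third differences of `h` vanish. -/
lemma third_difference (hq : Fintype.card F = q) (hodd : Odd q) (hq5 : 5 ≤ q) {m : ℕ}
    {C : Submodule F (Fin (m + 3) → F)} (hC : Interp C) (h : ℕ → ℚ)
    (hsum : ∀ v : Fin (m + 3) → F, ∑ c ∈ words C, h (hammingDist v c) = 1)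
    (r : ℕ) (hr : r ≤ m) :
    h r - 3 * h (r + 1) + 3 * h (r + 2) - h (r + 3) = 0 := by
  obtain ⟨w₀, w₁, w₂, h0, h1, h2, hw⟩ := exists_generic hq hodd hq5 hC
    (i := (0 : Fin (m + 3))) (j := 1) (k := 2)
    (by simp) (by simp [Fin.ext_iff, Nat.mod_eq_of_lt (show 2 < m + 3 by omega)])
    (by simp [Fin.ext_iff, Nat.mod_eq_of_lt (show 2 < m + 3 by omega)])
  let y : Fin m → F := fun i => if (i : ℕ) < r then 1 else 0
  have hy : #{i : Fin m | y i ≠ 0} = r := by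
    have : ({i : Fin m | y i ≠ 0} : Finset (Fin m)) = ({i : Fin m | (i : ℕ) < r} : Finset _) := by
      ext i; simp [y]
    rw [this, Fin.card_filter_val_lt]
    omega
  let g : F → F → F → (Fin (m + 3) → F) → ℚ := fun a b d c => h (hammingDist (word3 a b d y) c)
  let D : (Fin (m + 3) → F) → ℚ := fun c =>
    g 0 0 0 c - g w₀ 0 0 c - g 0 w₁ 0 c - g 0 0 w₂ c + g w₀ w₁ 0 c + g w₀ 0 w₂ c + g 0 w₁ w₂ c
      - g w₀ w₁ w₂ c
  have hD : ∑ c ∈ words C, D c = 0 := by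
    simp only [D, Finset.sum_sub_distrib, Finset.sum_add_distrib, g, hsum]
    norm_num
  have hD0 : ∀ c ∈ words C, c ≠ 0 → D c = 0 := by
    intro c hc hne
    have hex : ¬ ((c 0 = 0 ∨ c 0 = w₀) ∧ (c 1 = 0 ∨ c 1 = w₁) ∧ (c 2 = 0 ∨ c 2 = w₂)) :=
      fun hh => hne (hw c (mem_words.1 hc) hh.1 hh.2.1 hh.2.2)
    have hcase : (¬ 0 = c 0 ∧ ¬ w₀ = c 0) ∨ (¬ 0 = c 1 ∧ ¬ w₁ = c 1) ∨
        (¬ 0 = c 2 ∧ ¬ w₂ = c 2) := by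
      simp only [eq_comm (b := c _)]
      tauto
    simp only [D, g, hammingDist_word3]
    rcases hcase with ⟨e1, e2⟩ | ⟨e1, e2⟩ | ⟨e1, e2⟩ <;> simp only [e1, e2, if_false] <;> ring
  rw [Finset.sum_eq_single_of_mem 0 (mem_words.2 C.zero_mem) hD0] at hD
  simp only [D, g, hammingDist_word3, Pi.zero_apply, hy, h0, h1, h2, if_true, if_false] at hD
  ring_nf at hD ⊢
  linarith

lemma eq_three_of_upws (hq : Fintype.card F = q) (hodd : Odd q) (hC : Interp C)
    (hU : UPWS (C : Set (Fin (q + 1) → F))) : q = 3 := by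
  by_contra hne
  have h1 : 1 < q := hq ▸ Fintype.one_lt_card
  have hq5 : 5 ≤ q := by
    obtain ⟨k, rfl⟩ := hodd
    omega
  obtain ⟨β, hβ⟩ := hU
  set ρ := coveringRadius (C : Set (Fin (q + 1) → F)) with hρdef
  have hρ : ρ ≤ q - 2 := coveringRadius_le hq hodd hC
  let h : ℕ → ℚ := fun t => if t < ρ + 1 then β t else 0
  have hsum : ∀ v : Fin (q + 1) → F, ∑ c ∈ words C, h (hammingDist v c) = 1 := by
    intro v
    rw [← hβ v]
    have e : ∀ c, h (hammingDist v c)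
        = ∑ i ∈ Finset.range (ρ + 1), if hammingDist v c = i then β i else 0 := by
      intro c
      simp [h]
    simp only [e]
    rw [Finset.sum_comm]
    refine Finset.sum_congr rfl fun i _ => ?_
    rw [numAt_eq_card, ← Finset.sum_filter, Finset.sum_const, nsmul_eq_mul, mul_comm]
  have hbig : ∀ t, q - 1 ≤ t → h t = 0 := by
    intro t ht
    simp only [h]
    rw [if_neg (by omega)]
  have hdiff : ∀ r ≤ q - 2, h r - 3 * h (r + 1) + 3 * h (r + 2) - h (r + 3) = 0 := by
    intro r hr
    obtain ⟨m, rfl⟩ : ∃ m, q = m + 2 := ⟨q - 2, by omega⟩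
    exact third_difference hq hodd hq5 hC h hsum r (by omega)
  have hzero : ∀ s t, q - 1 ≤ t + s → h t = 0 := by
    intro s
    induction s with
    | zero => exact hbig
    | succ s ih =>
      intro t ht
      by_cases htq : q - 1 ≤ t
      · exact hbig t htq
      · have := hdiff t (by omega)
        rw [ih (t + 1) (by omega), ih (t + 2) (by omega), ih (t + 3) (by omega)] at this
        linarith
  have hall : ∀ t, h t = 0 := fun t => hzero q t (by omega)
  have := hsum 0
  simp only [hall, Finset.sum_const_zero] at this
  exact zero_ne_one this

/-! ### Order three -/

lemma completelyRegular_of_eq_three (hq : Fintype.card F = q) (hC2 : IsLinearCode C 2 q)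
    (h3 : q = 3) : CompletelyRegular (C : Set (Fin (q + 1) → F)) := by
  subst h3
  have hC := interp_of_isLinearCode hC2
  have hcard := card_words hq hC2.1
  -- Fibre sums of functions of the distance.
  have hfib : ∀ (v : Fin (3 + 1) → F) (f : ℕ → ℕ), ∑ c ∈ words C, f (agree v c)
      = ∑ t ∈ Finset.range 5, f (4 - t) * numAt (C : Set (Fin (3 + 1) → F)) v t := by
    intro v f
    have e : ∀ c, f (agree v c)
        = ∑ t ∈ Finset.range 5, if hammingDist v c = t then f (4 - t) else 0 := by
      intro c
      have := hammingDist_add_agree v c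
      rw [Finset.sum_ite_eq, if_pos (by rw [Finset.mem_range]; omega)]
      congr 1
      omega
    simp only [e]
    rw [Finset.sum_comm]
    refine Finset.sum_congr rfl fun t _ => ?_
    rw [numAt_eq_card, ← Finset.sum_filter, Finset.sum_const, smul_eq_mul, mul_comm]
  have hball : ∀ v, numAt (C : Set (Fin (3 + 1) → F)) v 0
      + numAt (C : Set (Fin (3 + 1) → F)) v 1 ≤ 1 := by
    intro v
    rw [numAt_eq_card, numAt_eq_card, ← Finset.card_union_of_disjoint, Finset.card_le_one]
    · intro c hc c' hc'
      simp only [Finset.mem_union, Finset.mem_filter, mem_words] at hc hc'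
      by_contra hne
      have hw : 3 ≤ hammingNorm (c - c') :=
        hC2.2.2 ⟨c - c', C.sub_mem (by tauto) (by tauto), sub_ne_zero.2 hne, rfl⟩
      rw [← hammingDist_eq_norm_sub] at hw
      have htri := hammingDist_triangle c v c'
      rw [hammingDist_comm c v] at htri
      omega
    · rw [Finset.disjoint_filter]
      intro c _ h0 h1
      omega
  have hmom : ∀ v (N : ℕ → ℕ), N = numAt (C : Set (Fin (3 + 1) → F)) v →
      N 0 + N 1 + N 2 + N 3 + N 4 = 9 ∧ 4 * N 0 + 3 * N 1 + 2 * N 2 + N 3 = 12 ∧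
      16 * N 0 + 9 * N 1 + 4 * N 2 + N 3 = 24 := by
    rintro v N rfl
    have m0 := hfib v (fun _ => 1)
    have m1 := hfib v (fun k => k)
    have m2 := hfib v (fun k => k ^ 2)
    rw [sum_agree hq hC] at m1
    rw [sum_agree_sq hq hC] at m2
    rw [Finset.sum_const, hcard] at m0
    simp [Finset.sum_range_succ] at m0 m1 m2
    omega
  have hbig : ∀ v t, 5 ≤ t → numAt (C : Set (Fin (3 + 1) → F)) v t = 0 := by
    intro v t ht
    rw [numAt_eq_card, Finset.card_eq_zero, Finset.filter_eq_empty_iff]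
    intro c _ hd
    have := hammingDist_add_agree v c
    omega
  have hzero_one : ∀ v, (distTo (C : Set (Fin (3 + 1) → F)) v = 0 ∧
        numAt (C : Set (Fin (3 + 1) → F)) v 0 = 1 ∧ numAt (C : Set (Fin (3 + 1) → F)) v 1 = 0) ∨
      (distTo (C : Set (Fin (3 + 1) → F)) v = 1 ∧
        numAt (C : Set (Fin (3 + 1) → F)) v 0 = 0 ∧
        numAt (C : Set (Fin (3 + 1) → F)) v 1 = 1) := by
    intro v
    have hd := distTo_le hq (by decide) hC v
    have hb := hball v
    have hne := numAt_distTo_ne_zero (C : Set (Fin (3 + 1) → F)) ⟨0, C.zero_mem⟩ v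
    have hlt := fun t => @numAt_eq_zero_of_lt _ _ _ _ (C : Set (Fin (3 + 1) → F)) v t
    obtain hd0 | hd1 : distTo (C : Set (Fin (3 + 1) → F)) v = 0 ∨
        distTo (C : Set (Fin (3 + 1) → F)) v = 1 := by omega
    · rw [hd0] at hne
      exact Or.inl ⟨hd0, by omega, by omega⟩
    · rw [hd1] at hne
      have := hlt 0 (by omega)
      exact Or.inr ⟨hd1, this, by omega⟩
  intro u v huv t
  have hu := hmom u _ rfl
  have hv := hmom v _ rfl
  have hu' := hzero_one u
  have hv' := hzero_one v
  by_cases ht : 5 ≤ t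
  · rw [hbig u t ht, hbig v t ht]
  · have : t < 5 := by omega
    interval_cases t <;> omega

end Plane

/-- For odd prime power `q`, a linear `[q+1, 2, q]_q` code is UPWS iff `q = 3`,
and completely regular iff `q = 3`. -/
theorem stmt_10 {F : Type*} [Field F] [Fintype F] [DecidableEq F] (q : ℕ)
    (hq : Fintype.card F = q) (hodd : Odd q)
    (C : Submodule F (Fin (q + 1) → F)) (hC : IsLinearCode C 2 q) :
    (UPWS (C : Set (Fin (q + 1) → F)) ↔ q = 3) ∧
    (CompletelyRegular (C : Set (Fin (q + 1) → F)) ↔ q = 3) := by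
  have hI := interp_of_isLinearCode hC
  have hCR : CompletelyRegular (C : Set (Fin (q + 1) → F)) → UPWS (C : Set (Fin (q + 1) → F)) :=
    CompletelyRegular.upws ⟨0, C.zero_mem⟩
  have h3 := completelyRegular_of_eq_three hq hC
  have hU := eq_three_of_upws hq hodd hI
  exact ⟨⟨hU, fun h => hCR (h3 h)⟩, ⟨fun h => hU (hCR h), h3⟩⟩
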